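/- Let G be a finite DAG with unique source s and unique sink t whose every arc lies on some s-t path. The unique multilinear polynomial representing DAG-Connectivity on G is p_G(x) = ∑_{H ∈ U(P_G), H ≠ ∅} (−1)^{D(H)} ∏_{e ∈ H} x_e, where D(H) = |H| − |V(H)∖{s,t}| − 1. -/

import Mathlib

/-- `l` is a directed path from `s` to `t` in the graph with arc set `E`,
source map `src` and target map `tgt`, given as a nonempty list of consecutive arcs. -/
def IsPathFrom {V E : Type} (src tgt : E → V) (s t : V) (l : List E) : Prop :=
  l ≠ [] ∧ (∀ e ∈ l.head?, src e = s) ∧ (∀ e ∈ l.getLast?, tgt e = t) ∧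
    l.Chain' (fun e f => tgt e = src f)

/-- The arc sets of directed paths from `s` to `t`. -/
def pathEdgeSets {V E : Type} [DecidableEq E] (src tgt : E → V) (s t : V) :
    Set (Finset E) :=
  {P | ∃ l : List E, IsPathFrom src tgt s t l ∧ l.Nodup ∧ P = l.toFinset}

/-- The arc sets which are unions of arc sets of `s`-`t` paths. -/
def unionOfPaths {V E : Type} [DecidableEq E] (src tgt : E → V) (s t : V) :
    Set (Finset E) :=
  {H | ∃ Ps : Set (Finset E), Ps ⊆ pathEdgeSets src tgt s t ∧ (H : Set E) = ⋃ p ∈ Ps, (p : Set E)}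

/-- The graph is acyclic: no directed cycles. -/
def IsAcyclicDigraph {V E : Type} (src tgt : E → V) : Prop :=
  ∀ v : V, ¬ Relation.TransGen (fun a b => ∃ e, src e = a ∧ tgt e = b) v v

/-- `s` is the unique source: exactly the vertices with no incoming arc are `s`. -/
def IsUniqueSource {V E : Type} (src tgt : E → V) (s : V) : Prop :=
  ∀ v : V, (¬ ∃ e, tgt e = v) ↔ v = s

/-- `t` is the unique sink: exactly the vertices with no outgoing arc are `t`. -/
def IsUniqueSink {V E : Type} (src tgt : E → V) (t : V) : Prop :=
  ∀ v : V, (¬ ∃ e, src e = v) ↔ v = t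

open Classical in
/-- The set of unit `s`-`t` flows supported on `K`. -/
noncomputable def flowSet {V E : Type} [Fintype E] (src tgt : E → V) (s t : V)
    (K : Set E) : Set (E → ℝ) :=
  {f | (∀ e, 0 ≤ f e) ∧ (∀ e, e ∉ K → f e = 0) ∧
    (∑ e ∈ Finset.univ.filter (fun e => src e = s), f e = 1) ∧
    ∀ v : V, v ≠ s → v ≠ t →
      ∑ e ∈ Finset.univ.filter (fun e => tgt e = v), f e =
        ∑ e ∈ Finset.univ.filter (fun e => src e = v), f e}

open Classical in
/-- `D(K) = |K| - |V(K) \ {s,t}| - 1` where `V(K)` is the set of endpoints of arcs of `K`. -/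
noncomputable def Dval {V E : Type} [Fintype V] [DecidableEq E] (src tgt : E → V)
    (s t : V) (K : Finset E) : ℤ :=
  (K.card : ℤ) - ((K.image src ∪ K.image tgt) \ {s, t}).card - 1

/-- A directed path whose start satisfies `Q` and whose end violates `R`, where `R` implies `Q`,
has an arc leaving `Q` for the complement of `R`. -/
lemma exists_crossing_arc {V E : Type} {src tgt : E → V} {Q R : V → Prop}
    (hRQ : ∀ v, R v → Q v) :
    ∀ l : List E, l ≠ [] → (∀ e ∈ l.head?, Q (src e)) → (∀ e ∈ l.getLast?, ¬ R (tgt e)) →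
      l.IsChain (fun e f => tgt e = src f) → ∃ e ∈ l, Q (src e) ∧ ¬ R (tgt e)
  | [], h, _, _, _ => absurd rfl h
  | [e], _, h1, h2, _ => ⟨e, by simp, h1 e (by simp), h2 e (by simp)⟩
  | e :: f :: l, _, h1, h2, h3 => by
    by_cases hR : R (tgt e)
    · rw [List.isChain_cons_cons] at h3
      obtain ⟨g, hg, hg'⟩ := exists_crossing_arc hRQ (f :: l) (by simp)
        (by simpa [← h3.1] using hRQ _ hR) (by simpa using h2) h3.2
      exact ⟨g, List.mem_cons_of_mem _ hg, hg'⟩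
    · exact ⟨e, by simp, h1 e (by simp), hR⟩

/-- The alternating sum over the subsets of `X` of a function that is insensitive to the
presence of some `e ∈ X` vanishes. -/
lemma sum_powerset_neg_one_pow_mul_eq_zero {E : Type} [DecidableEq E] {X : Finset E} {e : E}
    (he : e ∈ X) (φ : Finset E → ℝ) (hφ : ∀ H, e ∉ H → φ (insert e H) = φ H) :
    ∑ H ∈ X.powerset, (-1 : ℝ) ^ H.card * φ H = 0 := by
  rw [← Finset.insert_erase he, Finset.sum_powerset_insert (Finset.notMem_erase e X),
    ← Finset.sum_add_distrib]
  refine Finset.sum_eq_zero fun H hH => ?_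
  have heH : e ∉ H := fun h => Finset.notMem_erase e X (Finset.mem_powerset.1 hH h)
  rw [hφ H heH, Finset.card_insert_of_notMem heH]
  ring

/-- Every internal vertex entered by `H` is left by `H` and conversely. -/
def IsBalanced {V E : Type} (src tgt : E → V) (s t : V) (H : Finset E) : Prop :=
  ∀ v, v ≠ s → v ≠ t → ((∃ e ∈ H, tgt e = v) ↔ ∃ e ∈ H, src e = v)

section Acyclic

variable {V E : Type} {src tgt : E → V} {s t : V}

lemma IsAcyclicDigraph.not_transGen_arc (hacyc : IsAcyclicDigraph src tgt) (e : E) :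
    ¬ Relation.TransGen (fun e f => tgt e = src f) e e := fun h =>
  hacyc (src e) (Relation.TransGen.lift src (fun a _ hab => ⟨a, rfl, hab⟩) e e h)

lemma IsAcyclicDigraph.nodup_of_isChain (hacyc : IsAcyclicDigraph src tgt) {l : List E}
    (hl : l.IsChain (fun e f => tgt e = src f)) : l.Nodup := by
  have h : l.IsChain (Relation.TransGen fun e f => tgt e = src f) :=
    hl.imp fun _ _ h => Relation.TransGen.single h
  refine (List.isChain_iff_pairwise.1 h).imp ?_
  rintro a _ hab rfl
  exact hacyc.not_transGen_arc a hab

lemma IsAcyclicDigraph.wellFounded_arc [Finite E] (hacyc : IsAcyclicDigraph src tgt) :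
    WellFounded (fun e f => tgt e = src f) := by
  have : Std.Irrefl (Relation.TransGen fun e f => tgt e = src f) := ⟨hacyc.not_transGen_arc⟩
  refine Subrelation.wf ?_
    (Finite.wellFounded_of_trans_of_irrefl (Relation.TransGen fun e f => tgt e = src f))
  exact fun h => Relation.TransGen.single h

lemma IsAcyclicDigraph.wellFounded_arc_swap [Finite E] (hacyc : IsAcyclicDigraph src tgt) :
    WellFounded (fun f e => tgt e = src f) := by
  have : Std.Irrefl (Function.swap (Relation.TransGen fun e f => tgt e = src f)) :=
    ⟨hacyc.not_transGen_arc⟩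
  have : IsTrans E (Function.swap (Relation.TransGen fun e f => tgt e = src f)) :=
    ⟨fun _ _ _ h h' => Relation.TransGen.trans h' h⟩
  refine Subrelation.wf ?_ (Finite.wellFounded_of_trans_of_irrefl
    (Function.swap (Relation.TransGen fun e f => tgt e = src f)))
  exact fun h => Relation.TransGen.single h

lemma IsBalanced.exists_chain_to_sink [Finite E] (hacyc : IsAcyclicDigraph src tgt)
    (hs : ∀ e, tgt e ≠ s) {H : Finset E} (hH : IsBalanced src tgt s t H) (e : E) (he : e ∈ H) :
    ∃ l : List E, (e :: l).IsChain (fun e f => tgt e = src f) ∧ (∀ f ∈ e :: l, f ∈ H) ∧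
      ∀ f ∈ (e :: l).getLast?, tgt f = t := by
  induction e using hacyc.wellFounded_arc_swap.induction with
  | _ e ih =>
    by_cases h : tgt e = t
    · exact ⟨[], by simp, by simpa using he, by simpa using h⟩
    · obtain ⟨f, hf, hef⟩ := (hH (tgt e) (hs e) h).1 ⟨e, he, rfl⟩
      obtain ⟨l, h1, h2, h3⟩ := ih f hef.symm hf
      refine ⟨f :: l, List.isChain_cons_cons.2 ⟨hef.symm, h1⟩, ?_, by simpa using h3⟩
      intro g hg
      rcases List.mem_cons.1 hg with rfl | hg
      · exact he
      · exact h2 g hg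

lemma IsBalanced.exists_path_extending [Finite E] (hacyc : IsAcyclicDigraph src tgt)
    (ht : ∀ e, src e ≠ t) {H : Finset E} (hH : IsBalanced src tgt s t H) (e : E) (l : List E)
    (hl : (e :: l).IsChain (fun e f => tgt e = src f)) (hlH : ∀ f ∈ e :: l, f ∈ H)
    (hlt : ∀ f ∈ (e :: l).getLast?, tgt f = t) :
    ∃ l' : List E, IsPathFrom src tgt s t l' ∧ (∀ f ∈ l', f ∈ H) ∧ ∀ f ∈ e :: l, f ∈ l' := by
  induction e using hacyc.wellFounded_arc.induction generalizing l with
  | _ e ih =>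
    by_cases h : src e = s
    · exact ⟨e :: l, ⟨by simp, by simpa using h, hlt, hl⟩, hlH, fun _ => id⟩
    · obtain ⟨f, hf, hef⟩ := (hH (src e) h (ht e)).2 ⟨e, hlH e (by simp), rfl⟩
      obtain ⟨l', h1, h2, h3⟩ := ih f hef (e :: l) (List.isChain_cons_cons.2 ⟨hef, hl⟩)
        (by
          intro g hg
          rcases List.mem_cons.1 hg with rfl | hg
          · exact hf
          · exact hlH g hg)
        (by simpa using hlt)
      exact ⟨l', h1, h2, fun g hg => h3 g (List.mem_cons_of_mem _ hg)⟩

/-- In an acyclic digraph every arc of a balanced arc set lies on a path inside that set. -/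
lemma IsBalanced.exists_path [Finite E] [DecidableEq E] (hacyc : IsAcyclicDigraph src tgt)
    (hs : ∀ e, tgt e ≠ s) (ht : ∀ e, src e ≠ t)
    {H : Finset E} (hH : IsBalanced src tgt s t H) {e : E} (he : e ∈ H) :
    ∃ p ∈ pathEdgeSets src tgt s t, e ∈ p ∧ p ⊆ H := by
  obtain ⟨l, h1, h2, h3⟩ := hH.exists_chain_to_sink hacyc hs e he
  obtain ⟨l', h4, h5, h6⟩ := hH.exists_path_extending hacyc ht e l h1 h2 h3
  refine ⟨l'.toFinset, ⟨l', h4, hacyc.nodup_of_isChain h4.2.2.2, rfl⟩, ?_, ?_⟩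
  · simpa using h6 e (by simp)
  · intro f hf
    exact h5 f (by simpa using hf)

lemma exists_next_arc : ∀ (l : List E), l.IsChain (fun e f => tgt e = src f) →
    (∀ e ∈ l.getLast?, tgt e = t) → ∀ e ∈ l, tgt e ≠ t → ∃ f ∈ l, src f = tgt e
  | [], _, _, _, he, _ => by simp at he
  | [a], _, h2, e, he, hne => by
    obtain rfl : e = a := by simpa using he
    exact absurd (h2 e (by simp)) hne
  | a :: b :: l, h1, h2, e, he, hne => by
    rw [List.isChain_cons_cons] at h1
    rcases List.mem_cons.1 he with rfl | he
    · exact ⟨b, by simp, h1.1.symm⟩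
    · obtain ⟨f, hf, hf'⟩ := exists_next_arc (b :: l) h1.2 (by simpa using h2) e he hne
      exact ⟨f, List.mem_cons_of_mem _ hf, hf'⟩

lemma exists_prev_arc : ∀ (l : List E), l.IsChain (fun e f => tgt e = src f) →
    ∀ e ∈ l, (∀ a ∈ l.head?, src a ≠ src e) → ∃ f ∈ l, tgt f = src e
  | [], _, _, he, _ => by simp at he
  | [a], _, e, he, h => by
    obtain rfl : e = a := by simpa using he
    exact absurd rfl (h e (by simp))
  | a :: b :: l, h1, e, he, h => by
    rw [List.isChain_cons_cons] at h1
    rcases List.mem_cons.1 he with rfl | he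
    · exact absurd rfl (h e (by simp))
    · by_cases hb : src b = src e
      · exact ⟨a, by simp, h1.1.trans hb⟩
      · obtain ⟨f, hf, hf'⟩ := exists_prev_arc (b :: l) h1.2 e he (by simpa using hb)
        exact ⟨f, List.mem_cons_of_mem _ hf, hf'⟩

lemma isBalanced_of_mem_unionOfPaths [DecidableEq E] {H : Finset E}
    (h : H ∈ unionOfPaths src tgt s t) : IsBalanced src tgt s t H := by
  obtain ⟨Ps, hPs, hHP⟩ := h
  have mem_iff : ∀ e, e ∈ H ↔ ∃ p ∈ Ps, e ∈ p := fun e => by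
    rw [← Finset.mem_coe, hHP]; simp
  intro v hvs hvt
  constructor
  · rintro ⟨e, he, rfl⟩
    obtain ⟨p, hp, hep⟩ := (mem_iff e).1 he
    obtain ⟨l, hl, -, rfl⟩ := hPs hp
    obtain ⟨f, hf, hf'⟩ := exists_next_arc l hl.2.2.2 hl.2.2.1 e (by simpa using hep) hvt
    exact ⟨f, (mem_iff f).2 ⟨_, hp, by simpa using hf⟩, hf'⟩
  · rintro ⟨e, he, rfl⟩
    obtain ⟨p, hp, hep⟩ := (mem_iff e).1 he
    obtain ⟨l, hl, -, rfl⟩ := hPs hp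
    obtain ⟨f, hf, hf'⟩ := exists_prev_arc l hl.2.2.2 e (by simpa using hep)
      (fun a ha h => hvs (h ▸ hl.2.1 a ha))
    exact ⟨f, (mem_iff f).2 ⟨_, hp, by simpa using hf⟩, hf'⟩

lemma mem_unionOfPaths_iff_isBalanced [Finite E] [DecidableEq E]
    (hacyc : IsAcyclicDigraph src tgt) (hs : ∀ e, tgt e ≠ s) (ht : ∀ e, src e ≠ t)
    {H : Finset E} : H ∈ unionOfPaths src tgt s t ↔ IsBalanced src tgt s t H := by
  refine ⟨isBalanced_of_mem_unionOfPaths, fun hH => ?_⟩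
  refine ⟨{p | p ∈ pathEdgeSets src tgt s t ∧ p ⊆ H}, fun p hp => hp.1, ?_⟩
  ext e
  simp only [Finset.mem_coe, Set.mem_iUnion, Set.mem_ofPred_eq, exists_prop]
  constructor
  · intro he
    obtain ⟨p, hp, hep, hpH⟩ := hH.exists_path hacyc hs ht he
    exact ⟨p, ⟨hp, hpH⟩, hep⟩
  · rintro ⟨p, ⟨-, hpH⟩, hep⟩
    exact hpH hep

end Acyclic

open Classical in
/-- The local factor at `v`: it is `1` if `H` avoids `v`, `-1` if `H` both enters and leaves `v`,
and `0` otherwise. -/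
noncomputable def vertexWeight {V E : Type} (src tgt : E → V) (H : Finset E) (v : V) : ℝ :=
  (if ∃ e ∈ H, tgt e = v then 0 else 1) + (if ∃ e ∈ H, src e = v then -1 else 0)

open Classical in
lemma prod_vertexWeight {V E : Type} [Fintype V] [DecidableEq E] (src tgt : E → V) (s t : V)
    (H : Finset E) :
    ∏ v ∈ Finset.univ \ {s, t}, vertexWeight src tgt H v =
      if IsBalanced src tgt s t H then
        (-1 : ℝ) ^ ((H.image src ∪ H.image tgt) \ {s, t}).card else 0 := by
  split_ifs with hH
  · have hsub : (H.image src ∪ H.image tgt) \ {s, t} ⊆ Finset.univ \ {s, t} :=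
      Finset.sdiff_subset_sdiff (Finset.subset_univ _) le_rfl
    rw [← Finset.prod_const, ← Finset.prod_subset hsub]
    · refine Finset.prod_congr rfl fun v hv => ?_
      simp only [Finset.mem_sdiff, Finset.mem_union, Finset.mem_image, Finset.mem_insert,
        Finset.mem_singleton, not_or] at hv
      have hb := hH v hv.2.1 hv.2.2
      have hout : ∃ e ∈ H, src e = v := hv.1.elim id hb.1
      simp only [vertexWeight, if_pos hout, if_pos (hb.2 hout), zero_add]
    · intro v hv hv'
      simp only [Finset.mem_sdiff, Finset.mem_union, Finset.mem_image, Finset.mem_insert,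
        Finset.mem_singleton, Finset.mem_univ, true_and] at hv hv'
      have hnot : ¬ ((∃ e ∈ H, src e = v) ∨ ∃ e ∈ H, tgt e = v) := fun h => hv' ⟨h, hv⟩
      rw [not_or] at hnot
      simp only [vertexWeight, if_neg hnot.1, if_neg hnot.2, add_zero]
  · simp only [IsBalanced, not_forall] at hH
    obtain ⟨v, hvs, hvt, hv⟩ := hH
    refine Finset.prod_eq_zero (i := v) (by simp [hvs, hvt]) ?_
    unfold vertexWeight
    split_ifs with h1 h2 h2
    · exact absurd (iff_of_true h1 h2) hv
    · simp
    · simp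
    · exact absurd (iff_of_false h1 h2) hv

open Classical in
/-- If `X` contains an `s`-`t` path, the signed sum of vertex weights over subsets of `X` is `0`. -/
lemma sum_prod_vertexWeight_eq_zero {V E : Type} [Fintype V] [DecidableEq E]
    {src tgt : E → V} {s t : V} {X : Finset E} {l : List E} (hl : IsPathFrom src tgt s t l)
    (hlX : ∀ e ∈ l, e ∈ X) :
    ∑ H ∈ X.powerset, (-1 : ℝ) ^ H.card *
      ∏ v ∈ Finset.univ \ {s, t}, vertexWeight src tgt H v = 0 := by
  simp only [vertexWeight, Finset.prod_add, Finset.mul_sum]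
  rw [Finset.sum_comm]
  refine Finset.sum_eq_zero fun A hA => ?_
  have hA' : ∀ v ∈ A, v ≠ s ∧ v ≠ t := fun v hv => by
    simpa using Finset.mem_powerset.1 hA hv
  obtain ⟨e, hel, hsrc, htgt⟩ := exists_crossing_arc (src := src) (tgt := tgt)
    (Q := fun v => v ∈ A ∨ v = s) (R := fun v => v ∈ A) (fun v hv => Or.inl hv) l hl.1
    (fun e he => Or.inr (hl.2.1 e he)) (fun e he h => (hA' _ h).2 (hl.2.2.1 e he)) hl.2.2.2
  refine sum_powerset_neg_one_pow_mul_eq_zero (hlX e hel) _ fun H _ => ?_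
  congr 1
  · refine Finset.prod_congr rfl fun v hv => ?_
    have hne : tgt e ≠ v := fun h => htgt (h ▸ hv)
    simp [hne]
  · refine Finset.prod_congr rfl fun v hv => ?_
    have hne : src e ≠ v := by
      rintro rfl
      simp only [Finset.mem_sdiff, Finset.mem_univ, Finset.mem_insert, not_or, true_and] at hv
      exact hsrc.elim hv.2 hv.1.1
    simp [hne]

open Classical in
/-- If `X` contains no `s`-`t` path, only the empty set contributes to the signed sum. -/
lemma sum_prod_vertexWeight_eq_one {V E : Type} [Fintype V] [Finite E] [DecidableEq E]
    {src tgt : E → V} {s t : V} (hacyc : IsAcyclicDigraph src tgt)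
    (hs : ∀ e, tgt e ≠ s) (ht : ∀ e, src e ≠ t) {X : Finset E}
    (hX : ¬ ∃ p ∈ pathEdgeSets src tgt s t, p ⊆ X) :
    ∑ H ∈ X.powerset, (-1 : ℝ) ^ H.card *
      ∏ v ∈ Finset.univ \ {s, t}, vertexWeight src tgt H v = 1 := by
  rw [Finset.sum_eq_single_of_mem ∅ (Finset.empty_mem_powerset X)]
  · simp [vertexWeight]
  · intro H hHX hH
    obtain ⟨e, he⟩ := Finset.nonempty_iff_ne_empty.2 hH
    rw [prod_vertexWeight, if_neg, mul_zero]
    intro hbal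
    obtain ⟨p, hp, -, hpH⟩ := hbal.exists_path hacyc hs ht he
    exact hX ⟨p, hp, hpH.trans (Finset.mem_powerset.1 hHX)⟩

open Classical in
/-- The sum over all unions of paths, the empty one included, as a signed sum of vertex weights. -/
lemma sum_unionOfPaths_eq {V E : Type} [Fintype V] [Fintype E] [DecidableEq E]
    {src tgt : E → V} {s t : V} (hacyc : IsAcyclicDigraph src tgt)
    (hs : ∀ e, tgt e ≠ s) (ht : ∀ e, src e ≠ t) (x : E → Bool) :
    ∑ H ∈ Finset.univ.filter (fun H : Finset E => H ∈ unionOfPaths src tgt s t),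
        (-1 : ℝ) ^ (Dval src tgt s t H) * ∏ e ∈ H, (if x e = true then (1 : ℝ) else 0) =
      -∑ H ∈ (Finset.univ.filter (fun e => x e = true)).powerset, (-1 : ℝ) ^ H.card *
        ∏ v ∈ Finset.univ \ {s, t}, vertexWeight src tgt H v := by
  have hpow : (Finset.univ.filter (fun e => x e = true)).powerset =
      Finset.univ.filter (fun H : Finset E => ∀ e ∈ H, x e = true) := by
    ext H
    simp [Finset.subset_iff]
  rw [hpow, Finset.sum_filter, Finset.sum_filter, ← Finset.sum_neg_distrib]
  refine Finset.sum_congr rfl fun H _ => ?_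
  rw [prod_vertexWeight, Finset.prod_ite_zero, Finset.prod_const_one]
  simp only [mem_unionOfPaths_iff_isBalanced hacyc hs ht]
  by_cases hH : IsBalanced src tgt s t H <;> by_cases hx : ∀ e ∈ H, x e = true
  · have hm : (-1 : ℝ) ≠ 0 := by norm_num
    rw [if_pos hH, if_pos hx, if_pos hx, if_pos hH, Dval, zpow_sub₀ hm, zpow_sub₀ hm,
      zpow_natCast, zpow_natCast, zpow_one, mul_one, div_eq_mul_inv, div_eq_mul_inv, ← inv_pow]
    norm_num
  all_goals simp [hH, hx]

open Classical in
/-- The unique multilinear polynomial representing `DAG-Connectivity` on a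
finite DAG (unique source `s`, unique sink `t`, every arc on some `s`-`t` path)
is `p_G(x) = ∑_{∅ ≠ H ∈ U(P_G)} (-1)^{D(H)} ∏_{e ∈ H} x_e`. -/
theorem stmt12 (V E : Type) [Fintype V] [Fintype E] [DecidableEq E]
    (src tgt : E → V) (s t : V)
    (hacyc : IsAcyclicDigraph src tgt)
    (hs : IsUniqueSource src tgt s) (ht : IsUniqueSink src tgt t)
    (hcover : ∀ e : E, ∃ p ∈ pathEdgeSets src tgt s t, e ∈ p) :
    ∀ x : E → Bool,
      (if ∃ p ∈ pathEdgeSets src tgt s t, ∀ e ∈ p, x e = true then (1 : ℝ) else 0) =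
        ∑ H ∈ (Finset.univ.filter
            (fun H : Finset E => H ∈ unionOfPaths src tgt s t)).erase ∅,
          (-1 : ℝ) ^ (Dval src tgt s t H) *
            ∏ e ∈ H, (if x e = true then (1 : ℝ) else 0) := by
  intro x
  have hs' : ∀ e, tgt e ≠ s := fun e he => (hs s).2 rfl ⟨e, he⟩
  have ht' : ∀ e, src e ≠ t := fun e he => (ht t).2 rfl ⟨e, he⟩
  have hempty : (∅ : Finset E) ∈
      Finset.univ.filter (fun H : Finset E => H ∈ unionOfPaths src tgt s t) :=
    Finset.mem_filter.2 ⟨Finset.mem_univ _, ∅, Set.empty_subset _, by simp⟩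
  have hDempty : (-1 : ℝ) ^ Dval src tgt s t ∅ = -1 := by simp [Dval]
  have hsum := sum_unionOfPaths_eq hacyc hs' ht' x
  rw [← Finset.add_sum_erase _ _ hempty, hDempty, Finset.prod_empty] at hsum
  split_ifs with h
  · obtain ⟨_, ⟨l, hl, -, rfl⟩, hlx⟩ := h
    rw [sum_prod_vertexWeight_eq_zero hl fun e he => by simpa using hlx e (by simpa using he)]
      at hsum
    linarith
  · rw [sum_prod_vertexWeight_eq_one hacyc hs' ht'] at hsum
    · linarith
    · rintro ⟨p, hp, hpX⟩
      exact h ⟨p, hp, fun e he => (Finset.mem_filter.1 (hpX he)).2⟩
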